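/- Let ℓ ∈ 𝕃, ν ∈ (0,1], and let {λ_t} be boosting iterates whose steps α_i are Wolfe steps, i.e. each α_i ≥ 0 satisfies both L(A(λ_{i−1}+α_i v_i)) ≤ L(Aλ_{i−1}) − α_i(1−ν/2)·‖Aᵀ∇L(Aλ_{i−1})‖_∞ and ∇L(A(λ_{i−1}+α_i v_i))ᵀA v_i ≥ −(1−ν/4)·‖Aᵀ∇L(Aλ_{i−1})‖_∞. Then for all integers t > t₀ ≥ 0: L(Aλ_t) ≤ L(Aλ_{t₀})·exp(−(ν(2−ν)/(8·C_{t₀+1}⁶))·Σ_{i=t₀+1}^{t} γ_i²). -/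

import Mathlib

open Real Finset

noncomputable section

/-- The property that `C` is a valid curvature constant at level `z`:
`C ≥ 1` and `C⁻¹ ≤ eˣ / ℓ⁽ⁱ⁾(x) ≤ C` for all `x ≤ z` and `i ∈ {0,1,2}`. -/
def CBound (ℓ : ℝ → ℝ) (z C : ℝ) : Prop :=
  1 ≤ C ∧ ∀ x ≤ z, ∀ i ≤ 2,
    C⁻¹ ≤ Real.exp x / iteratedDeriv i ℓ x ∧ Real.exp x / iteratedDeriv i ℓ x ≤ C

/-- `C_ℓ(z)`: the least valid curvature constant at level `z`. -/
def Cconst (ℓ : ℝ → ℝ) (z : ℝ) : ℝ := sInf {C : ℝ | CBound ℓ z C}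

/-- Membership in the class `𝕃`: positive, twice continuously differentiable,
strictly convex, and `C_ℓ(z) < ∞` (i.e. some valid constant exists) for every `z`. -/
def MemL (ℓ : ℝ → ℝ) : Prop :=
  (∀ x, 0 < ℓ x) ∧ ContDiff ℝ 2 ℓ ∧ StrictConvexOn ℝ Set.univ ℓ ∧
    ∀ z : ℝ, ∃ C : ℝ, CBound ℓ z C

/-- Membership in `𝕃_∞`: in `𝕃` and moreover `C_ℓ(z) → 1` as `z → −∞`. -/
def MemLinf (ℓ : ℝ → ℝ) : Prop :=
  MemL ℓ ∧ Filter.Tendsto (Cconst ℓ) Filter.atBot (nhds 1)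

variable {m n : ℕ}

/-- The empirical risk `L(Aλ) = (1/m) Σᵢ ℓ((Aλ)ᵢ)`. -/
def LL (ℓ : ℝ → ℝ) (A : Matrix (Fin m) (Fin n) ℝ) (lam : Fin n → ℝ) : ℝ :=
  (∑ i, ℓ (A.mulVec lam i)) / m

/-- The gradient vector `∇L(Aλ)`, with `i`-th entry `ℓ'((Aλ)ᵢ)/m`. -/
def gradL (ℓ : ℝ → ℝ) (A : Matrix (Fin m) (Fin n) ℝ) (lam : Fin n → ℝ) : Fin m → ℝ :=
  fun i => deriv ℓ (A.mulVec lam i) / m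

/-- `‖Aᵀ ∇L(Aλ)‖_∞`. -/
def gInf (ℓ : ℝ → ℝ) (A : Matrix (Fin m) (Fin n) ℝ) (lam : Fin n → ℝ) : ℝ :=
  ⨆ j : Fin n, |∑ i, gradL ℓ A lam i * A i j|

/-- `‖∇L(Aλ)‖₁`. -/
def gOne (ℓ : ℝ → ℝ) (A : Matrix (Fin m) (Fin n) ℝ) (lam : Fin n → ℝ) : ℝ :=
  ∑ i, |gradL ℓ A lam i|

/-- `γ̂ = ‖Aᵀ∇L(Aλ)‖_∞ / ‖∇L(Aλ)‖₁`. -/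
def gammaHat (ℓ : ℝ → ℝ) (A : Matrix (Fin m) (Fin n) ℝ) (lam : Fin n → ℝ) : ℝ :=
  gInf ℓ A lam / gOne ℓ A lam

/-- `C = C_ℓ(ℓ⁻¹(m · L(Aλ)))`. -/
def Cstep (ℓ : ℝ → ℝ) (A : Matrix (Fin m) (Fin n) ℝ) (lam : Fin n → ℝ) : ℝ :=
  Cconst ℓ (Function.invFun ℓ ((m : ℝ) * LL ℓ A lam))

/-- The (minimum `l¹`) margin `M(Aλ) = min_k (−(Aλ)_k) / ‖λ‖₁`. -/
def margin (A : Matrix (Fin m) (Fin n) ℝ) (lam : Fin n → ℝ) : ℝ :=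
  ⨅ k : Fin m, (-(A.mulVec lam k)) / (∑ j, |lam j|)

/-- The maximum margin `γ = max_{‖λ‖₁=1} min_i (−(Aλ)ᵢ)`. -/
def gammaMax (A : Matrix (Fin m) (Fin n) ℝ) : ℝ :=
  sSup {r : ℝ | ∃ lam : Fin n → ℝ, (∑ j, |lam j|) = 1 ∧ r = ⨅ i : Fin m, -(A.mulVec lam i)}

/-- Boosting iterates: `λ₀ = 0`, `λ_t = λ_{t-1} + α_t • v_t` where `v_t` is a signed
standard basis vector satisfying `∇L(Aλ_{t-1})ᵀ A v_t = −‖Aᵀ∇L(Aλ_{t-1})‖_∞`. -/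
def IsBoostSeq (ℓ : ℝ → ℝ) (A : Matrix (Fin m) (Fin n) ℝ)
    (lam : ℕ → Fin n → ℝ) (α : ℕ → ℝ) (v : ℕ → Fin n → ℝ) : Prop :=
  lam 0 = 0 ∧
  (∀ t : ℕ, 1 ≤ t → lam t = lam (t-1) + α t • v t) ∧
  (∀ t : ℕ, 1 ≤ t → ∃ s : ℝ, (s = 1 ∨ s = -1) ∧ ∃ j : Fin n, v t = s • (Pi.single j (1:ℝ) : Fin n → ℝ)) ∧
  (∀ t : ℕ, 1 ≤ t →
    ∑ i, gradL ℓ A (lam (t-1)) i * A.mulVec (v t) i = - gInf ℓ A (lam (t-1)))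

/-- The quantity `Υ_ν(γ)`. -/
def Upsilon (ν γ : ℝ) : ℝ :=
  ((2/ν) * Real.log 2 - (2/ν) * Real.log ((1+γ) ^ (1-ν) + (1-γ) ^ (1-ν))
      - Real.log (1-γ^2)) /
    (Real.log (1+γ) - Real.log (1-γ))

lemma cbound_cconst {ℓ : ℝ → ℝ} (hℓ : MemL ℓ) (z : ℝ) : CBound ℓ z (Cconst ℓ z) := by
  obtain ⟨C₀, hC₀⟩ := hℓ.2.2.2 z
  have hne : ({C : ℝ | CBound ℓ z C}).Nonempty := ⟨C₀, hC₀⟩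
  refine ⟨le_csInf hne fun C hC => hC.1, ?_⟩
  intro x hx i hi
  have hpos : 0 < Real.exp x / iteratedDeriv i ℓ x :=
    lt_of_lt_of_le (inv_pos.mpr (by linarith [hC₀.1])) (hC₀.2 x hx i hi).1
  refine ⟨?_, le_csInf hne fun C hC => (hC.2 x hx i hi).2⟩
  have h1 : (Real.exp x / iteratedDeriv i ℓ x)⁻¹ ≤ Cconst ℓ z := by
    refine le_csInf hne fun C hC => ?_
    exact inv_le_of_inv_le₀ (by linarith [hC.1]) (hC.2 x hx i hi).1
  exact inv_le_of_inv_le₀ hpos h1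

lemma cbound_bounds {ℓ : ℝ → ℝ} {z C : ℝ} (h : CBound ℓ z C) {x : ℝ} (hx : x ≤ z) {i : ℕ}
    (hi : i ≤ 2) : Real.exp x ≤ C * iteratedDeriv i ℓ x ∧ iteratedDeriv i ℓ x ≤ C * Real.exp x ∧
      0 < iteratedDeriv i ℓ x := by
  obtain ⟨h1, h2⟩ := h.2 x hx i hi
  have hC : 0 < C := by linarith [h.1]
  have hr : 0 < Real.exp x / iteratedDeriv i ℓ x := lt_of_lt_of_le (inv_pos.mpr hC) h1
  have hd : 0 < iteratedDeriv i ℓ x := by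
    by_contra hcon
    push Not at hcon
    exact absurd (div_nonpos_of_nonneg_of_nonpos (Real.exp_pos x).le hcon) (not_le.mpr hr)
  refine ⟨(div_le_iff₀ hd).mp h2, ?_, hd⟩
  rw [le_div_iff₀ hd] at h1
  have := mul_le_mul_of_nonneg_left h1 hC.le
  rwa [← mul_assoc, mul_inv_cancel₀ hC.ne', one_mul] at this

lemma memL_deriv_pos {ℓ : ℝ → ℝ} (hℓ : MemL ℓ) (x : ℝ) : 0 < deriv ℓ x := by
  have := (cbound_bounds (cbound_cconst hℓ x) le_rfl (i := 1) (by norm_num)).2.2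
  rwa [iteratedDeriv_one] at this

lemma memL_strictMono {ℓ : ℝ → ℝ} (hℓ : MemL ℓ) : StrictMono ℓ :=
  strictMono_of_deriv_pos (memL_deriv_pos hℓ)

lemma memL_exists {ℓ : ℝ → ℝ} (hℓ : MemL ℓ) (x y : ℝ) (hxy : ℓ x ≤ y) : ∃ w, ℓ w = y := by
  have hd : Differentiable ℝ ℓ := hℓ.2.1.differentiable (by norm_num)
  have hp := memL_deriv_pos hℓ x
  set b := x + (y - ℓ x) / deriv ℓ x + 1 with hb
  have hxb : x < b := by
    have : 0 ≤ (y - ℓ x) / deriv ℓ x := div_nonneg (by linarith) hp.le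
    linarith
  have h1 : deriv ℓ x ≤ slope ℓ x b :=
    hℓ.2.2.1.convexOn.deriv_le_slope (Set.mem_univ _) (Set.mem_univ _) hxb hd.differentiableAt
  rw [slope_def_field, le_div_iff₀ (by linarith)] at h1
  have h2 : deriv ℓ x * (b - x) = (y - ℓ x) + deriv ℓ x := by
    rw [hb]; field_simp; ring
  have h3 : y ∈ Set.Icc (ℓ x) (ℓ b) := ⟨hxy, by linarith⟩
  obtain ⟨w, -, hw⟩ := intermediate_value_Icc hxb.le hd.continuous.continuousOn h3
  exact ⟨w, hw⟩

lemma coord_le {m n : ℕ} (hm : 0 < m) (A : Matrix (Fin m) (Fin n) ℝ) {ℓ : ℝ → ℝ} (hℓ : MemL ℓ)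
    (lam mu : Fin n → ℝ) (h : LL ℓ A mu ≤ LL ℓ A lam) (k : Fin m) :
    A.mulVec mu k ≤ Function.invFun ℓ ((m : ℝ) * LL ℓ A lam) := by
  have hm' : (0 : ℝ) < m := by exact_mod_cast hm
  have key : ∀ lam' : Fin n → ℝ, ℓ (A.mulVec lam' k) ≤ m * LL ℓ A lam' := by
    intro lam'
    unfold LL
    rw [mul_div_cancel₀ _ hm'.ne']
    exact Finset.single_le_sum (f := fun i => ℓ (A.mulVec lam' i)) (fun i _ => (hℓ.1 _).le)
      (Finset.mem_univ k)
  have hex := memL_exists hℓ _ _ (key lam)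
  have h1 := Function.invFun_eq hex
  rw [← (memL_strictMono hℓ).le_iff_le, h1]
  exact (key mu).trans (mul_le_mul_of_nonneg_left h hm'.le)

lemma one_step {m n : ℕ} (hm : 0 < m)
    (A : Matrix (Fin m) (Fin n) ℝ)
    (ℓ : ℝ → ℝ) (hℓ : MemL ℓ) (ν : ℝ) (hν : ν ∈ Set.Ioc (0:ℝ) 1)
    (z C : ℝ) (hC : CBound ℓ z C) (lam v : Fin n → ℝ) (α G : ℝ)
    (hz : ∀ mu, LL ℓ A mu ≤ LL ℓ A lam → ∀ k, A.mulVec mu k ≤ z)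
    (hd : ∀ k, |A.mulVec v k| ≤ 1)
    (hG : 0 ≤ G)
    (hg : ∑ i, gradL ℓ A lam i * A.mulVec v i = - G)
    (hα : 0 ≤ α)
    (hw1 : LL ℓ A (lam + α • v) ≤ LL ℓ A lam - α * (1 - ν/2) * G)
    (hw2 : ∑ k, gradL ℓ A (lam + α • v) k * A.mulVec v k ≥ -(1 - ν/4) * G) :
    LL ℓ A (lam + α • v) ≤ LL ℓ A lam *
      Real.exp (-(ν * (2-ν) / (8 * C^6)) * (G / gOne ℓ A lam)^2) := by
  obtain ⟨hν0, hν1⟩ := hν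
  have hm' : (0 : ℝ) < m := by exact_mod_cast hm
  have hC0 : 0 < C := by linarith [hC.1]
  set L0 := LL ℓ A lam with hL0
  have hL0pos : 0 < L0 := by
    rw [hL0]; unfold LL
    haveI : Nonempty (Fin m) := ⟨⟨0, hm⟩⟩
    exact div_pos (Finset.sum_pos (fun i _ => hℓ.1 _) Finset.univ_nonempty) hm'
  have hmv : ∀ a : ℝ, ∀ k, A.mulVec (lam + a • v) k = A.mulVec lam k + a * A.mulVec v k := by
    intro a k
    rw [Matrix.mulVec_add, Matrix.mulVec_smul]; simp
  have hdec : LL ℓ A (lam + α • v) ≤ L0 := by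
    have : 0 ≤ α * (1 - ν/2) * G := mul_nonneg (mul_nonneg hα (by linarith)) hG
    linarith
  -- convexity along the segment
  have hconv : ConvexOn ℝ Set.univ (fun a : ℝ => LL ℓ A (lam + a • v)) := by
    refine ⟨convex_univ, ?_⟩
    intro a _ b _ p q hp hq hpq
    simp only [LL, hmv, smul_eq_mul]
    rw [← mul_div_assoc, ← mul_div_assoc, ← add_div, Finset.mul_sum, Finset.mul_sum,
      ← Finset.sum_add_distrib]
    refine div_le_div_of_nonneg_right (Finset.sum_le_sum fun k _ => ?_) hm'.le
    have h := hℓ.2.2.1.convexOn.2 (Set.mem_univ (A.mulVec lam k + a * A.mulVec v k))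
      (Set.mem_univ (A.mulVec lam k + b * A.mulVec v k)) hp hq hpq
    simp only [smul_eq_mul] at h
    convert h using 2
    have : A.mulVec lam k = (p + q) * A.mulVec lam k := by rw [hpq, one_mul]
    linear_combination this
  have hseg : ∀ a ∈ Set.Icc 0 α, LL ℓ A (lam + a • v) ≤ L0 := by
    intro a ha
    have := hconv.le_max_of_mem_Icc (Set.mem_univ 0) (Set.mem_univ α) ha
    refine this.trans (max_le ?_ hdec)
    simp [hL0]
  -- derivative
  have hdd : Differentiable ℝ (deriv ℓ) := by
    have h2 : ContDiff ℝ (1 + 1) ℓ := by simpa [one_add_one_eq_two] using hℓ.2.1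
    exact (contDiff_succ_iff_deriv.mp h2).2.2.differentiable (by norm_num)
  have hder : ∀ a : ℝ, HasDerivAt
      (fun a : ℝ => ∑ k, gradL ℓ A (lam + a • v) k * A.mulVec v k)
      (∑ k, (deriv (deriv ℓ) (A.mulVec (lam + a • v) k) * A.mulVec v k) / m * A.mulVec v k) a := by
    intro a
    refine HasDerivAt.fun_sum fun k _ => ?_
    refine HasDerivAt.mul_const ?_ _
    simp only [gradL, hmv]
    refine HasDerivAt.div_const ?_ _
    refine HasDerivAt.comp a (hdd.differentiableAt.hasDerivAt) ?_
    simpa using ((hasDerivAt_id a).mul_const (A.mulVec v k)).const_add (A.mulVec lam k)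
  have hbd : ∀ a ∈ Set.Icc 0 α,
      ∑ k, (deriv (deriv ℓ) (A.mulVec (lam + a • v) k) * A.mulVec v k) / m * A.mulVec v k
        ≤ C^2 * L0 := by
    intro a ha
    have hzz := hz _ (hseg a ha)
    calc _ ≤ ∑ k, C^2 * ℓ (A.mulVec (lam + a • v) k) / m := by
          refine Finset.sum_le_sum fun k _ => ?_
          obtain ⟨-, h2, h2p⟩ := cbound_bounds hC (hzz k) (i := 2) le_rfl
          obtain ⟨h0, -, -⟩ := cbound_bounds hC (hzz k) (i := 0) (by norm_num)
          rw [iteratedDeriv_succ, iteratedDeriv_one] at h2 h2p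
          rw [iteratedDeriv_zero] at h0
          rw [div_mul_eq_mul_div]
          refine div_le_div_of_nonneg_right ?_ hm'.le
          have hsq : A.mulVec v k * A.mulVec v k ≤ 1 := by
            have := abs_le.mp (hd k); nlinarith
          have h3 := mul_le_mul_of_nonneg_left hsq h2p.le
          have h4 := mul_le_mul_of_nonneg_left h0 hC0.le
          linarith
      _ = C^2 * LL ℓ A (lam + a • v) := by
          unfold LL
          rw [← Finset.sum_div, ← Finset.mul_sum, mul_div_assoc]
      _ ≤ _ := mul_le_mul_of_nonneg_left (hseg a ha) (by positivity)
  have hmvt := Convex.image_sub_le_mul_sub_of_deriv_le (convex_Icc (0:ℝ) α)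
    (fun a _ => (hder a).continuousAt.continuousWithinAt)
    (fun a _ => (hder a).differentiableAt.differentiableWithinAt)
    (C := C^2 * L0)
    (fun a ha => by rw [(hder a).deriv]; exact hbd a (interior_subset ha))
    0 (Set.left_mem_Icc.mpr hα) α (Set.right_mem_Icc.mpr hα) hα
  simp only [zero_smul, add_zero, sub_zero] at hmvt
  rw [hg] at hmvt
  have hαlow : ν / 4 * G ≤ C^2 * L0 * α := by linarith
  -- gOne bound
  have hone : L0 ≤ C^2 * gOne ℓ A lam := by
    rw [hL0]; unfold LL gOne gradL
    rw [Finset.mul_sum, Finset.sum_div]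
    refine Finset.sum_le_sum fun k _ => ?_
    have hzz := hz _ le_rfl k
    obtain ⟨h1, -, h1p⟩ := cbound_bounds hC hzz (i := 1) (by norm_num)
    obtain ⟨-, h0, -⟩ := cbound_bounds hC hzz (i := 0) (by norm_num)
    rw [iteratedDeriv_one] at h1 h1p
    rw [iteratedDeriv_zero] at h0
    rw [abs_of_pos (div_pos h1p hm'), ← mul_div_assoc]
    refine div_le_div_of_nonneg_right ?_ hm'.le
    have h4 := mul_le_mul_of_nonneg_left h1 hC0.le
    linarith
  have hgpos : 0 < gOne ℓ A lam := by
    by_contra hcon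
    push Not at hcon
    have : C^2 * gOne ℓ A lam ≤ 0 := mul_nonpos_of_nonneg_of_nonpos (by positivity) hcon
    linarith
  set g := gOne ℓ A lam
  set E := ν * (2-ν) / (8 * C^6) * (G / g)^2 with hE
  have hmain : L0 * E ≤ α * (1 - ν/2) * G := by
    have e1 : ν / 4 * G / (C^2 * L0) ≤ α := by
      rw [div_le_iff₀ (by positivity)]; linarith
    have e2 : ν / 4 * G / (C^2 * L0) * ((1 - ν/2) * G) ≤ α * ((1 - ν/2) * G) :=
      mul_le_mul_of_nonneg_right e1 (mul_nonneg (by linarith) hG)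
    have e3 : L0 * E ≤ ν / 4 * G / (C^2 * L0) * ((1 - ν/2) * G) := by
      have hq : L0^2 ≤ (C^2 * g)^2 := pow_le_pow_left₀ hL0pos.le hone 2
      have eq1 : L0 * E = (ν * (2 - ν) / 8 * G^2 / (C^2 * L0)) * (L0^2 / (C^2*g)^2) := by
        rw [hE]; field_simp
      have eq2 : ν / 4 * G / (C^2 * L0) * ((1 - ν/2) * G)
          = (ν * (2 - ν) / 8 * G^2 / (C^2 * L0)) := by
        field_simp; ring
      rw [eq1, eq2]
      refine mul_le_of_le_one_right ?_ (div_le_one_of_le₀ hq (by positivity))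
      have : 0 ≤ 2 - ν := by linarith
      positivity
    linarith
  have hexp : 1 - E ≤ Real.exp (-E) := by linarith [Real.add_one_le_exp (-E)]
  have hfin := mul_le_mul_of_nonneg_left hexp hL0pos.le
  rw [neg_mul, ← hE]
  linarith

/-- risk convergence for Wolfe steps. -/
theorem risk_conv_wolfe {m n : ℕ} (hm : 0 < m) (hn : 0 < n)
    (A : Matrix (Fin m) (Fin n) ℝ) (hA : ∀ i j, |A i j| ≤ 1)
    (ℓ : ℝ → ℝ) (hℓ : MemL ℓ)
    (ν : ℝ) (hν : ν ∈ Set.Ioc (0:ℝ) 1)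
    (lam : ℕ → Fin n → ℝ) (α : ℕ → ℝ) (v : ℕ → Fin n → ℝ)
    (hseq : IsBoostSeq ℓ A lam α v)
    (hwolfe : ∀ i : ℕ, 1 ≤ i →
      0 ≤ α i ∧
      LL ℓ A (lam (i-1) + α i • v i) ≤
        LL ℓ A (lam (i-1)) - α i * (1 - ν/2) * gInf ℓ A (lam (i-1)) ∧
      ∑ k, gradL ℓ A (lam (i-1) + α i • v i) k * A.mulVec (v i) k ≥
        -(1 - ν/4) * gInf ℓ A (lam (i-1)))
    (t₀ t : ℕ) (ht : t₀ < t) :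
    LL ℓ A (lam t) ≤ LL ℓ A (lam t₀) *
      Real.exp (-(ν * (2-ν) / (8 * (Cstep ℓ A (lam t₀))^6)) *
        ∑ i ∈ Finset.Icc (t₀+1) t, (gammaHat ℓ A (lam (i-1)))^2) := by
  obtain ⟨-, hstep, hv, hgr⟩ := hseq
  have hGnn : ∀ mu, 0 ≤ gInf ℓ A mu := fun mu => Real.iSup_nonneg fun j => abs_nonneg _
  have hdec : ∀ s, LL ℓ A (lam (s+1)) ≤ LL ℓ A (lam s) := by
    intro s
    obtain ⟨h0, h1, -⟩ := hwolfe (s+1) (by omega)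
    rw [← hstep (s+1) (by omega), Nat.add_sub_cancel] at h1
    have : 0 ≤ α (s+1) * (1 - ν/2) * gInf ℓ A (lam s) :=
      mul_nonneg (mul_nonneg h0 (by linarith [hν.2])) (hGnn _)
    linarith
  have hanti : Antitone fun s => LL ℓ A (lam s) := antitone_nat_of_succ_le hdec
  have hC := cbound_cconst hℓ (Function.invFun ℓ ((m : ℝ) * LL ℓ A (lam t₀)))
  have hone : ∀ s, t₀ ≤ s → LL ℓ A (lam (s+1)) ≤ LL ℓ A (lam s) *
      Real.exp (-(ν * (2-ν) / (8 * (Cstep ℓ A (lam t₀))^6)) * (gammaHat ℓ A (lam s))^2) := by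
    intro s hs
    obtain ⟨h0, h1, h2⟩ := hwolfe (s+1) (by omega)
    have hg := hgr (s+1) (by omega)
    have hst := hstep (s+1) (by omega)
    simp only [Nat.add_sub_cancel] at h1 h2 hg hst
    rw [hst]
    refine one_step hm A ℓ hℓ ν hν _ _ hC (lam s) (v (s+1)) (α (s+1)) _ ?_ ?_ (hGnn _) hg h0 h1 h2
    · intro mu hmu k
      exact coord_le hm A hℓ _ _ (hmu.trans (hanti hs)) k
    · intro k
      obtain ⟨c, hc, j, hj⟩ := hv (s+1) (by omega)
      rw [hj, Matrix.mulVec_smul]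
      have := hA k j
      rcases hc with rfl | rfl <;> simpa using this
  induction t, ht using Nat.le_induction with
  | base => simpa using hone t₀ le_rfl
  | succ s hs ih =>
    rw [Finset.sum_Icc_succ_top (by omega), mul_add, Real.exp_add, ← mul_assoc]
    refine (hone s (by omega)).trans ?_
    rw [Nat.add_sub_cancel]
    exact mul_le_mul_of_nonneg_right ih (Real.exp_pos _).le
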